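/- For every n-qubit mixed state ρ and every γ ∈ ℝ: if 4^n · Σ_{x ∈ 𝔽₂^{2n}} p_ρ(x)³ ≥ γ, then the stabilizer fidelity satisfies F(ρ) ≥ (4γ − 1)/3. -/

import Mathlib

open scoped BigOperators ComplexOrder

/-- The phase space `𝔽₂^{2n}`, written as pairs `(a, b)` with `a, b ∈ 𝔽₂ⁿ`. -/
abbrev PhaseSpace (n : ℕ) := (Fin n → ZMod 2) × (Fin n → ZMod 2)

/-- The symplectic product `[x, y] = a·d + b·c` for `x = (a,b)`, `y = (c,d)`. -/
def sympl {n : ℕ} (x y : PhaseSpace n) : ZMod 2 :=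
  ∑ i, x.1 i * y.2 i + ∑ i, x.2 i * y.1 i

/-- The symplectic Fourier transform `f̂(a) = 4^{-n} ∑_x (-1)^{[a,x]} f(x)`. -/
noncomputable def sft {n : ℕ} (f : PhaseSpace n → ℝ) (a : PhaseSpace n) : ℝ :=
  (1 / 4 ^ n) * ∑ x, (-1 : ℝ) ^ (sympl a x).val * f x

/-- The symplectic complement of a set `S ⊆ 𝔽₂^{2n}`. -/
def symplComplement {n : ℕ} (S : Set (PhaseSpace n)) : Set (PhaseSpace n) :=
  {x | ∀ a ∈ S, sympl x a = 0}

/-- The Weyl operator `W_x = i^{a·b} X^a Z^b` for `x = (a,b)`, as a `2^n × 2^n` matrix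
indexed by `𝔽₂ⁿ`: `(W_x)_{k,j} = i^{a·b} (-1)^{b·j} [k = j + a]`. -/
noncomputable def Weyl {n : ℕ} (x : PhaseSpace n) :
    Matrix (Fin n → ZMod 2) (Fin n → ZMod 2) ℂ :=
  fun k j => Complex.I ^ (∑ i, (x.1 i).val * (x.2 i).val) *
    (if k = j + x.1 then (-1 : ℂ) ^ (∑ i, (x.2 i).val * (j i).val) else 0)

/-- `p_H(x) = 2^{-n} tr(W_x H)²` (the trace is real for Hermitian `H`). -/
noncomputable def pFun {n : ℕ} (H : Matrix (Fin n → ZMod 2) (Fin n → ZMod 2) ℂ)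
    (x : PhaseSpace n) : ℝ :=
  ((Weyl x * H).trace.re) ^ 2 / 2 ^ n

/-- A set is Lagrangian if it equals its symplectic complement. -/
def IsLagrangian {n : ℕ} (S : Set (PhaseSpace n)) : Prop :=
  S = symplComplement S

/-- The outer product `|φ⟩⟨φ|` of a vector `φ ∈ ℂ^{2^n}`. -/
noncomputable def outer {n : ℕ} (φ : (Fin n → ZMod 2) → ℂ) :
    Matrix (Fin n → ZMod 2) (Fin n → ZMod 2) ℂ :=
  Matrix.vecMulVec φ (fun j => starRingEnd ℂ (φ j))

/-- `Weyl(σ) = {x : tr(W_x σ) = ±1}`. -/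
def weylSet {n : ℕ} (σ : Matrix (Fin n → ZMod 2) (Fin n → ZMod 2) ℂ) :
    Set (PhaseSpace n) :=
  {x | (Weyl x * σ).trace = 1 ∨ (Weyl x * σ).trace = -1}

/-- A unit vector `φ` is a stabilizer state iff `Weyl(|φ⟩⟨φ|)` is Lagrangian. -/
def IsStabilizerState {n : ℕ} (φ : (Fin n → ZMod 2) → ℂ) : Prop :=
  (∑ j, Complex.normSq (φ j)) = 1 ∧ IsLagrangian (weylSet (outer φ))

/-- The stabilizer fidelity `F(ρ) = max_{stabilizer |φ⟩} ⟨φ|ρ|φ⟩ = max tr(ρ|φ⟩⟨φ|)`. -/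
noncomputable def stabFidelity {n : ℕ}
    (ρ : Matrix (Fin n → ZMod 2) (Fin n → ZMod 2) ℂ) : ℝ :=
  ⨆ φ : {φ : (Fin n → ZMod 2) → ℂ // IsStabilizerState φ}, ((ρ * outer φ.1).trace).re

/-!
For `x, y` with `[x, y] ≠ 0` the operators `W_x`, `W_y` anticommute, and nonnegativity of the
variance of `tr (W_x ρ) W_x + tr (W_y ρ) W_y` gives `2ⁿ p_ρ(x) + 2ⁿ p_ρ(y) ≤ 1`. Hence the points
with `2ⁿ p_ρ > 1/2` are pairwise orthogonal and lie in a Lagrangian `L`. Since `2ⁿ p_ρ` is at most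
`1` on `L` and at most `1/2` off `L`, `4ⁿ ∑ p_ρ³ ≤ 1/4 ∑ p_ρ + 3/4 ∑_{x ∈ L} p_ρ(x)`, where
`∑ p_ρ = tr ρ² ≤ 1`.

The commuting operators `W_x`, `x ∈ L`, have a joint orthonormal eigenbasis `φ_k`, which consists
of stabilizer states. The diagonal part of `ρ` in this basis has the Weyl coefficients of `ρ` on `L`
and none off `L`, so by the Plancherel identity
`∑_{x ∈ L} p_ρ(x) = ∑_k ⟨φ_k|ρ|φ_k⟩² ≤ max_k ⟨φ_k|ρ|φ_k⟩ ≤ F(ρ)`.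
-/

section Matrices

open Module Module.End
open scoped Matrix

variable {𝕜 m : Type*} [RCLike 𝕜] [Fintype m]

/-- A mixed state: a positive semidefinite matrix of trace one. -/
structure IsDensityMatrix (ρ : Matrix m m 𝕜) : Prop where
  posSemidef : ρ.PosSemidef
  trace_eq_one : ρ.trace = 1

lemma ofReal_re_trace_mul_of_isHermitian {A B : Matrix m m 𝕜} (hA : A.IsHermitian)
    (hB : B.IsHermitian) : (RCLike.re (A * B).trace : 𝕜) = (A * B).trace := by
  rw [← RCLike.conj_eq_iff_re, starRingEnd_apply, ← Matrix.trace_conjTranspose,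
    Matrix.conjTranspose_mul, hA.eq, hB.eq, Matrix.trace_mul_comm]

lemma isDensityMatrix_vecMulVec_star {v : m → 𝕜} (hv : v ⬝ᵥ star v = 1) :
    IsDensityMatrix (Matrix.vecMulVec v (star v)) :=
  ⟨Matrix.posSemidef_vecMulVec_self_star v, by rw [Matrix.trace_vecMulVec, hv]⟩

lemma vecMulVec_star_mul_self {v : m → 𝕜} (hv : v ⬝ᵥ star v = 1) :
    Matrix.vecMulVec v (star v) * Matrix.vecMulVec v (star v) = Matrix.vecMulVec v (star v) := by
  rw [Matrix.vecMulVec_mul_vecMulVec, dotProduct_comm, hv, one_smul]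

namespace IsDensityMatrix

variable {ρ : Matrix m m 𝕜}

lemma sq_re_trace_mul_le (hρ : IsDensityMatrix ρ) {A : Matrix m m 𝕜} (hA : A.IsHermitian) :
    RCLike.re (A * ρ).trace ^ 2 ≤ RCLike.re (A * A * ρ).trace := by
  classical
  -- Nonnegativity of the variance `tr ((A - a)² ρ)` about the mean `a = tr (A ρ)`.
  set a : ℝ := RCLike.re (A * ρ).trace with ha
  set D : Matrix m m 𝕜 := A - (a : 𝕜) • 1 with hD
  have hDH : D.conjTranspose = D := by simp [hD, hA.eq]
  have hvar : 0 ≤ (D * D * ρ).trace := by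
    have := (hρ.posSemidef.mul_mul_conjTranspose_same D).trace_nonneg
    rwa [hDH, Matrix.trace_mul_comm, ← Matrix.mul_assoc] at this
  have hexpand : D * D * ρ = A * A * ρ - (2 * a : 𝕜) • (A * ρ) + (a * a : 𝕜) • ρ := by
    simp only [hD, sub_mul, mul_sub, Matrix.smul_mul, Matrix.mul_smul, one_mul, mul_one]
    module
  have htrace : (D * D * ρ).trace = (A * A * ρ).trace - ((2 * a * a - a * a : ℝ) : 𝕜) := by
    rw [hexpand, Matrix.trace_add, Matrix.trace_sub, Matrix.trace_smul, Matrix.trace_smul,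
      hρ.trace_eq_one, ← ofReal_re_trace_mul_of_isHermitian hA hρ.posSemidef.isHermitian, ← ha]
    push_cast [smul_eq_mul]
    ring
  have := (RCLike.nonneg_iff.1 (htrace ▸ hvar)).1
  rw [map_sub, RCLike.ofReal_re] at this
  linarith

lemma re_trace_mul_mem_Icc (hρ : IsDensityMatrix ρ) {P : Matrix m m 𝕜} (hP : P.IsHermitian)
    (hPP : P * P = P) : RCLike.re (P * ρ).trace ∈ Set.Icc (0 : ℝ) 1 := by
  have h := hρ.sq_re_trace_mul_le hP
  rw [hPP] at h
  constructor <;> nlinarith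

lemma re_trace_mul_self_le_one (hρ : IsDensityMatrix ρ) : RCLike.re (ρ * ρ).trace ≤ 1 := by
  classical
  have hH := hρ.posSemidef.isHermitian
  have hsum : ∑ i, hH.eigenvalues i = 1 := by
    have h := hH.trace_eq_sum_eigenvalues
    rw [hρ.trace_eq_one] at h
    exact_mod_cast h.symm
  have htrace : (ρ * ρ).trace = ((∑ i, hH.eigenvalues i ^ 2 : ℝ) : 𝕜) := by
    conv_lhs => rw [hH.spectral_theorem, ← map_mul, Unitary.conjStarAlgAut_apply,
      Matrix.trace_mul_comm, ← mul_assoc, Unitary.coe_star_mul_self, one_mul,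
      Matrix.diagonal_mul_diagonal, Matrix.trace_diagonal]
    simp [sq]
  calc RCLike.re (ρ * ρ).trace = ∑ i, hH.eigenvalues i ^ 2 := by rw [htrace, RCLike.ofReal_re]
    _ ≤ (∑ i, hH.eigenvalues i) ^ 2 :=
      Finset.sum_sq_le_sq_sum_of_nonneg fun i _ => hρ.posSemidef.eigenvalues_nonneg i
    _ = 1 := by rw [hsum, one_pow]

end IsDensityMatrix

lemma sum_vecMulVec_star_orthonormalBasis [DecidableEq m] {κ : Type*} [Fintype κ]
    (b : OrthonormalBasis κ 𝕜 (EuclideanSpace 𝕜 m)) :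
    ∑ k, Matrix.vecMulVec (b k) (star (b k)) = (1 : Matrix m m 𝕜) := by
  ext i j
  have := b.sum_inner_mul_inner (EuclideanSpace.single i 1) (EuclideanSpace.single j 1)
  simpa [Matrix.sum_apply, Matrix.vecMulVec_apply, Matrix.one_apply, eq_comm (a := i),
    EuclideanSpace.inner_single_left, EuclideanSpace.inner_single_right, PiLp.single_apply]
    using this

lemma exists_orthonormalBasis_jointEigenvectors {ι E : Type*} [NormedAddCommGroup E]
    [InnerProductSpace 𝕜 E] [FiniteDimensional 𝕜 E] {T : ι → E →ₗ[𝕜] E}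
    (hT : ∀ i, (T i).IsSymmetric) (hcomm : Pairwise (Function.onFun Commute T)) :
    ∃ b : OrthonormalBasis (Fin (finrank 𝕜 E)) 𝕜 E, ∀ k i, ∃ c : 𝕜, T i (b k) = c • b k := by
  classical
  have hint := LinearMap.IsSymmetric.directSum_isInternal_of_pairwise_commute hT hcomm
  have hort := LinearMap.IsSymmetric.orthogonalFamily_iInf_eigenspaces hT
  let V (χ : ι → 𝕜) : Submodule 𝕜 E := ⨅ i, eigenspace (T i) (χ i)
  let v (χ : ι → 𝕜) : Basis _ 𝕜 (V χ) := (stdOrthonormalBasis 𝕜 (V χ)).toBasis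
  have hv : Orthonormal 𝕜 (hint.collectedBasis v) :=
    hint.collectedBasis_orthonormal hort (by simp [v])
  let _ : Fintype (Σ χ, Fin (finrank 𝕜 (V χ))) :=
    have := Module.Finite.finite_basis (hint.collectedBasis v)
    Fintype.ofFinite _
  let b := (hint.collectedBasis v).toOrthonormalBasis hv
  let e := Fintype.equivFinOfCardEq (finrank_eq_card_basis (hint.collectedBasis v)).symm
  refine ⟨b.reindex e, fun k i => ⟨(e.symm k).1 i, ?_⟩⟩
  have hmem : b (e.symm k) ∈ V (e.symm k).1 := by
    rw [Basis.coe_toOrthonormalBasis]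
    exact hint.collectedBasis_mem v (e.symm k)
  rw [b.reindex_apply]
  exact mem_eigenspace_iff.1 ((Submodule.mem_iInf _).1 hmem i)

lemma exists_orthonormalBasis_jointEigenvectors_matrix {ι : Type*}
    {A : ι → Matrix m m 𝕜} (hA : ∀ i, (A i).IsHermitian)
    (hcomm : Pairwise (Function.onFun Commute A)) :
    ∃ b : OrthonormalBasis m 𝕜 (EuclideanSpace 𝕜 m), ∀ k i, ∃ c : 𝕜, A i *ᵥ b k = c • b k := by
  classical
  obtain ⟨b, hb⟩ := exists_orthonormalBasis_jointEigenvectors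
    (T := fun i => Matrix.toEuclideanLin (A i))
    (fun i => Matrix.isSymmetric_toEuclideanLin_iff.2 (hA i))
    fun i j hij => (hcomm hij).map (Matrix.toLpLinAlgEquiv 2)
  let e : Fin (finrank 𝕜 (EuclideanSpace 𝕜 m)) ≃ m :=
    (Fintype.equivFinOfCardEq finrank_euclideanSpace.symm).symm
  refine ⟨b.reindex e, fun k i => ?_⟩
  obtain ⟨c, hc⟩ := hb (e.symm k) i
  refine ⟨c, ?_⟩
  rw [b.reindex_apply]
  exact congrArg WithLp.ofLp hc

end Matrices

section WalshCharacters

variable {ι : Type*} [Fintype ι]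

/-- The Walsh character `j ↦ (-1)^(b·j)` of `𝔽₂^ι`; it carries the signs of the Weyl operators. -/
noncomputable def walsh (b : ι → ZMod 2) : AddChar (ι → ZMod 2) ℂ :=
  (AddChar.zmodChar 2 (neg_one_sq (R := ℂ))).compAddMonoidHom (dotProductBilin ℤ ℤ b).toAddMonoidHom

lemma walsh_apply (b j : ι → ZMod 2) : walsh b j = (-1) ^ (b ⬝ᵥ j).val := rfl

lemma neg_one_pow_val_add (u v : ZMod 2) :
    (-1 : ℂ) ^ (u + v).val = (-1) ^ u.val * (-1) ^ v.val := by
  rw [ZMod.val_add, ← neg_one_pow_eq_pow_mod_two, pow_add]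

lemma neg_one_pow_sum_val_mul_val (b j : ι → ZMod 2) :
    (-1 : ℂ) ^ (∑ i, (b i).val * (j i).val) = walsh b j := by
  rw [walsh_apply, neg_one_pow_eq_pow_mod_two, ← ZMod.val_natCast]
  simp [dotProduct]

lemma walsh_comm (b j : ι → ZMod 2) : walsh b j = walsh j b := by
  rw [walsh_apply, walsh_apply, dotProduct_comm]

lemma walsh_mul_self (b j : ι → ZMod 2) : walsh b j * walsh b j = 1 := by
  rw [← AddChar.map_add_eq_mul, ZModModule.add_self, AddChar.map_zero_eq_one]

lemma star_walsh (b j : ι → ZMod 2) : star (walsh b j) = walsh b j := by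
  simp [walsh_apply]

lemma walsh_eq_zero_iff {v : ι → ZMod 2} : walsh v = 0 ↔ v = 0 := by
  classical
  refine ⟨fun h => ?_, fun h => by ext; simp [h, walsh_apply]⟩
  ext i
  have hi : (-1 : ℂ) ^ (v i).val = 1 := by
    simpa [walsh_apply] using DFunLike.congr_fun h (Pi.single i 1)
  generalize v i = u at hi ⊢
  fin_cases u
  · rfl
  · norm_num [ZMod.val] at hi

lemma sum_walsh [DecidableEq ι] (v : ι → ZMod 2) :
    ∑ b, walsh b v = if v = 0 then (2 : ℂ) ^ Fintype.card ι else 0 := by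
  simp [walsh_comm _ v, AddChar.sum_eq_ite, walsh_eq_zero_iff, ZMod.card]

end WalshCharacters

section WeylOperators

variable {n : ℕ}

lemma sympl_self (x : PhaseSpace n) : sympl x x = 0 := by
  simp only [sympl, mul_comm, CharTwo.add_self_eq_zero]

lemma sympl_comm (x y : PhaseSpace n) : sympl x y = sympl y x := by
  simp only [sympl, mul_comm, add_comm]

lemma neg_one_pow_sympl (x y : PhaseSpace n) :
    (-1 : ℂ) ^ (sympl x y).val = walsh x.2 y.1 * walsh y.2 x.1 := by
  rw [walsh_comm y.2, mul_comm, walsh_apply, walsh_apply, ← neg_one_pow_val_add]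
  rfl

/-- The phase `i^(a·b)` that makes the Weyl operator of `(a, b)` Hermitian. -/
noncomputable def weylPhase (x : PhaseSpace n) : ℂ :=
  Complex.I ^ (∑ i, (x.1 i).val * (x.2 i).val)

lemma weylPhase_mul_self (x : PhaseSpace n) : weylPhase x * weylPhase x = walsh x.1 x.2 := by
  rw [weylPhase, ← mul_pow, Complex.I_mul_I, neg_one_pow_sum_val_mul_val]

lemma star_weylPhase (x : PhaseSpace n) : star (weylPhase x) = weylPhase x * walsh x.1 x.2 := by
  rw [weylPhase, ← neg_one_pow_sum_val_mul_val, ← mul_pow, star_pow]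
  simp

lemma Weyl_apply (x : PhaseSpace n) (k j : Fin n → ZMod 2) :
    Weyl x k j = weylPhase x * if k = j + x.1 then walsh x.2 j else 0 := by
  rw [← neg_one_pow_sum_val_mul_val]
  rfl

lemma eq_add_iff_eq_add {G : Type*} [AddCommGroup G] [Module (ZMod 2) G] {a b c : G} :
    a = b + c ↔ b = a + c := by
  rw [← sub_eq_iff_eq_add, ZModModule.sub_eq_add, eq_comm]

lemma isHermitian_Weyl (x : PhaseSpace n) : (Weyl x).IsHermitian := by
  ext k j
  rw [Matrix.conjTranspose_apply, Weyl_apply, Weyl_apply, star_mul', star_weylPhase]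
  by_cases h : k = j + x.1
  · rw [if_pos h, if_pos (eq_add_iff_eq_add.1 h), star_walsh, h, AddChar.map_add_eq_mul,
      walsh_comm x.1]
    linear_combination (weylPhase x * walsh x.2 j) * walsh_mul_self x.2 x.1
  · rw [if_neg h, if_neg (mt eq_add_iff_eq_add.1 h), star_zero, mul_zero, mul_zero]

lemma Weyl_mul_Weyl_apply (x y : PhaseSpace n) (k j : Fin n → ZMod 2) :
    (Weyl x * Weyl y) k j = weylPhase x * weylPhase y *
      if k = j + y.1 + x.1 then walsh x.2 (j + y.1) * walsh y.2 j else 0 := by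
  rw [Matrix.mul_apply, Finset.sum_eq_single (j + y.1)]
  · rw [Weyl_apply, Weyl_apply, if_pos rfl]
    split_ifs <;> ring
  · intro i _ hi
    rw [Weyl_apply y, if_neg hi, mul_zero, mul_zero]
  · simp

lemma Weyl_mul_self (x : PhaseSpace n) : Weyl x * Weyl x = 1 := by
  ext k j
  rw [Weyl_mul_Weyl_apply, add_assoc, ZModModule.add_self, add_zero, weylPhase_mul_self,
    AddChar.map_add_eq_mul, Matrix.one_apply, walsh_comm x.1]
  split_ifs
  · linear_combination
      (walsh x.2 x.1 * walsh x.2 x.1) * walsh_mul_self x.2 j + walsh_mul_self x.2 x.1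
  · rw [mul_zero]

lemma Weyl_mul_Weyl_comm (x y : PhaseSpace n) :
    Weyl x * Weyl y = (-1 : ℂ) ^ (sympl x y).val • (Weyl y * Weyl x) := by
  ext k j
  rw [Matrix.smul_apply, Weyl_mul_Weyl_apply, Weyl_mul_Weyl_apply, AddChar.map_add_eq_mul,
    AddChar.map_add_eq_mul, neg_one_pow_sympl, smul_eq_mul, add_right_comm]
  split_ifs
  · linear_combination -(weylPhase x * weylPhase y * walsh x.2 y.1 * walsh x.2 j * walsh y.2 j) *
      walsh_mul_self y.2 x.1
  · ring

lemma commute_Weyl_of_sympl_eq_zero {x y : PhaseSpace n} (h : sympl x y = 0) :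
    Commute (Weyl x) (Weyl y) := by
  simpa [h, Commute, SemiconjBy] using Weyl_mul_Weyl_comm x y

lemma Weyl_mul_Weyl_eq_neg_of_sympl_ne_zero {x y : PhaseSpace n} (h : sympl x y ≠ 0) :
    Weyl x * Weyl y = -(Weyl y * Weyl x) := by
  have hxy : sympl x y = 1 := Fin.eq_one_of_ne_zero _ h
  rw [Weyl_mul_Weyl_comm, hxy, ZMod.val_one, pow_one, neg_one_smul]

lemma Weyl_apply_mul_Weyl_apply (a b i j k l : Fin n → ZMod 2) :
    Weyl (a, b) i j * Weyl (a, b) k l =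
      if i = j + a ∧ k = l + a then walsh b (i + l) else 0 := by
  rw [Weyl_apply, Weyl_apply]
  by_cases h : i = j + a ∧ k = l + a
  · obtain ⟨rfl, rfl⟩ := h
    simp only [if_true, and_self, AddChar.map_add_eq_mul]
    have hphase := weylPhase_mul_self (a, b)
    rw [walsh_comm a] at hphase
    linear_combination walsh b j * walsh b l * hphase
  · rw [if_neg h]
    rcases not_and_or.1 h with h | h <;> simp [h]

lemma sum_Weyl_apply_mul_Weyl_apply (i j k l : Fin n → ZMod 2) :
    ∑ x, Weyl x i j * Weyl x k l = if i = l ∧ j = k then (2 : ℂ) ^ n else 0 := by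
  have hsum (a : Fin n → ZMod 2) : ∑ b, Weyl (a, b) i j * Weyl (a, b) k l =
      if a = i + j ∧ i = l ∧ j = k then (2 : ℂ) ^ n else 0 := by
    have hiff : (i = j + a ∧ k = l + a) ∧ i + l = 0 ↔ a = i + j ∧ i = l ∧ j = k := by
      rw [add_comm j, add_comm l, eq_add_iff_eq_add, eq_add_iff_eq_add (a := k),
        ← ZModModule.sub_eq_add i l, sub_eq_zero]
      constructor
      · rintro ⟨⟨rfl, h⟩, rfl⟩
        exact ⟨rfl, rfl, by rwa [add_comm k, add_right_inj] at h⟩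
      · rintro ⟨rfl, rfl, rfl⟩
        exact ⟨⟨rfl, add_comm _ _⟩, rfl⟩
    simp only [Weyl_apply_mul_Weyl_apply, ← hiff]
    by_cases ha : i = j + a ∧ k = l + a
    · simp only [if_pos ha, sum_walsh, Fintype.card_fin, and_iff_right ha]
    · simp only [if_neg ha, Finset.sum_const_zero, mt And.left ha, if_false]
  simp only [Fintype.sum_prod_type, hsum, ite_and, Finset.sum_ite_eq', Finset.mem_univ, if_true]

lemma sum_trace_Weyl_mul_smul_Weyl (A : Matrix (Fin n → ZMod 2) (Fin n → ZMod 2) ℂ) :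
    ∑ x, (Weyl x * A).trace • Weyl x = (2 : ℂ) ^ n • A := by
  ext k l
  calc (∑ x, (Weyl x * A).trace • Weyl x) k l
      = ∑ i, ∑ j, (∑ x, Weyl x i j * Weyl x k l) * A j i := by
        simp only [Matrix.sum_apply, Matrix.smul_apply, smul_eq_mul, Matrix.trace,
          Matrix.diag_apply, Matrix.mul_apply, Finset.sum_mul]
        rw [Finset.sum_comm]
        refine Finset.sum_congr rfl fun i _ => ?_
        rw [Finset.sum_comm]
        simp only [mul_right_comm]
    _ = ((2 : ℂ) ^ n • A) k l := by
        simp [sum_Weyl_apply_mul_Weyl_apply, ite_and, ite_mul]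

lemma sum_trace_Weyl_mul_mul_trace_Weyl_mul
    (A B : Matrix (Fin n → ZMod 2) (Fin n → ZMod 2) ℂ) :
    ∑ x, (Weyl x * A).trace * (Weyl x * B).trace = 2 ^ n * (A * B).trace := by
  have := congrArg (fun C => (C * B).trace) (sum_trace_Weyl_mul_smul_Weyl A)
  simpa only [Matrix.sum_mul, Matrix.trace_sum, Matrix.smul_mul, Matrix.trace_smul,
    smul_eq_mul] using this

end WeylOperators

section WeylCoefficients

variable {n : ℕ} {H K ρ : Matrix (Fin n → ZMod 2) (Fin n → ZMod 2) ℂ}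

/-- The Weyl coefficient `tr (W_x H)` of a Hermitian `H`; taking the real part then loses
nothing. -/
noncomputable def weylCoeff (H : Matrix (Fin n → ZMod 2) (Fin n → ZMod 2) ℂ)
    (x : PhaseSpace n) : ℝ :=
  (Weyl x * H).trace.re

lemma two_pow_mul_pFun (H : Matrix (Fin n → ZMod 2) (Fin n → ZMod 2) ℂ) (x : PhaseSpace n) :
    2 ^ n * pFun H x = weylCoeff H x ^ 2 :=
  mul_div_cancel₀ _ (by positivity)

lemma ofReal_weylCoeff (hH : H.IsHermitian) (x : PhaseSpace n) :
    (weylCoeff H x : ℂ) = (Weyl x * H).trace :=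
  ofReal_re_trace_mul_of_isHermitian (isHermitian_Weyl x) hH

lemma sum_weylCoeff_mul_weylCoeff (hH : H.IsHermitian) (hK : K.IsHermitian) :
    ∑ x, weylCoeff H x * weylCoeff K x = 2 ^ n * (H * K).trace.re := by
  have hreal : ((H * K).trace.re : ℂ) = (H * K).trace := ofReal_re_trace_mul_of_isHermitian hH hK
  have h := sum_trace_Weyl_mul_mul_trace_Weyl_mul H K
  rw [← hreal] at h
  simp only [← ofReal_weylCoeff hH, ← ofReal_weylCoeff hK] at h
  exact_mod_cast h

lemma sum_pFun (hH : H.IsHermitian) : ∑ x, pFun H x = (H * H).trace.re := by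
  have h : (2 : ℝ) ^ n * ∑ x, pFun H x = 2 ^ n * (H * H).trace.re := by
    simp only [Finset.mul_sum, two_pow_mul_pFun, sq, ← sum_weylCoeff_mul_weylCoeff hH hH]
  exact mul_left_cancel₀ (by positivity) h

namespace IsDensityMatrix

lemma weylCoeff_sq_le_one (hρ : IsDensityMatrix ρ) (x : PhaseSpace n) : weylCoeff ρ x ^ 2 ≤ 1 := by
  have h := hρ.sq_re_trace_mul_le (isHermitian_Weyl x)
  rwa [Weyl_mul_self, one_mul, hρ.trace_eq_one, RCLike.one_re] at h

lemma weylCoeff_sq_add_sq_le_one (hρ : IsDensityMatrix ρ) {x y : PhaseSpace n}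
    (hxy : sympl x y ≠ 0) : weylCoeff ρ x ^ 2 + weylCoeff ρ y ^ 2 ≤ 1 := by
  -- The observable `A = a W_x + b W_y` has mean `a² + b²` and, by anticommutation, `A² = a² + b²`.
  set a := weylCoeff ρ x with ha
  set b := weylCoeff ρ y with hb
  let A := (a : ℂ) • Weyl x + (b : ℂ) • Weyl y
  have hA : A.IsHermitian := by
    simp [A, Matrix.IsHermitian, (isHermitian_Weyl x).eq, (isHermitian_Weyl y).eq]
  have hAA : A * A = ((a ^ 2 + b ^ 2 : ℝ) : ℂ) • 1 := by
    simp only [A, add_mul, mul_add, Matrix.smul_mul, Matrix.mul_smul, Weyl_mul_self,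
      Weyl_mul_Weyl_eq_neg_of_sympl_ne_zero hxy]
    push_cast
    module
  have hmean : (A * ρ).trace.re = a ^ 2 + b ^ 2 := by
    simp only [A, add_mul, Matrix.smul_mul, Matrix.trace_add, Matrix.trace_smul, smul_eq_mul,
      Complex.add_re, Complex.re_ofReal_mul, sq, ha, hb, weylCoeff]
  have hsq : (A * A * ρ).trace.re = a ^ 2 + b ^ 2 := by
    rw [hAA, Matrix.smul_mul, one_mul, Matrix.trace_smul, hρ.trace_eq_one, smul_eq_mul, mul_one,
      Complex.ofReal_re]
  have hvar : (a ^ 2 + b ^ 2) ^ 2 ≤ a ^ 2 + b ^ 2 := by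
    simpa only [RCLike.re_to_complex, hmean, hsq] using hρ.sq_re_trace_mul_le hA
  nlinarith

end IsDensityMatrix

end WeylCoefficients

section Lagrangian

variable {n : ℕ}

/-- A set of pairwise symplectically orthogonal points of phase space. -/
def IsIsotropic (S : Set (PhaseSpace n)) : Prop :=
  S ⊆ symplComplement S

lemma IsLagrangian.isIsotropic {L : Set (PhaseSpace n)} (hL : IsLagrangian L) : IsIsotropic L :=
  hL.subset

lemma IsIsotropic.insert {S : Set (PhaseSpace n)} (hS : IsIsotropic S) {x : PhaseSpace n}
    (hx : x ∈ symplComplement S) : IsIsotropic (insert x S) := by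
  rintro u (rfl | hu) v (rfl | hv)
  · exact sympl_self _
  · exact hx v hv
  · rw [sympl_comm]
    exact hx u hu
  · exact hS hu v hv

lemma IsIsotropic.exists_isLagrangian_superset {S : Set (PhaseSpace n)} (hS : IsIsotropic S) :
    ∃ L, S ⊆ L ∧ IsLagrangian L := by
  obtain ⟨L, hSL, hL⟩ :=
    (Set.toFinite {S : Set (PhaseSpace n) | IsIsotropic S}).exists_le_maximal hS
  refine ⟨L, hSL, hL.prop.antisymm fun x hx => ?_⟩
  exact hL.le_of_ge (hL.prop.insert hx) (Set.subset_insert x L) (Set.mem_insert x L)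

lemma IsDensityMatrix.isIsotropic_setOf_half_lt
    {ρ : Matrix (Fin n → ZMod 2) (Fin n → ZMod 2) ℂ} (hρ : IsDensityMatrix ρ) :
    IsIsotropic {x | 1 / 2 < 2 ^ n * pFun ρ x} := by
  intro x hx y hy
  by_contra hxy
  have := hρ.weylCoeff_sq_add_sq_le_one hxy
  simp only [Set.mem_ofPred_eq, two_pow_mul_pFun] at hx hy
  linarith

end Lagrangian

section StabilizerStates

open scoped Matrix

variable {n : ℕ} {φ : (Fin n → ZMod 2) → ℂ} {ρ : Matrix (Fin n → ZMod 2) (Fin n → ZMod 2) ℂ}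
  {L : Set (PhaseSpace n)} {x : PhaseSpace n}

lemma dotProduct_star_eq_one_iff {m : Type*} [Fintype m] {v : m → ℂ} :
    v ⬝ᵥ star v = 1 ↔ ∑ j, Complex.normSq (v j) = 1 := by
  simp only [dotProduct, Pi.star_apply, RCLike.star_def, Complex.mul_conj]
  norm_cast

lemma isDensityMatrix_outer (hφ : ∑ j, Complex.normSq (φ j) = 1) : IsDensityMatrix (outer φ) :=
  isDensityMatrix_vecMulVec_star (dotProduct_star_eq_one_iff.2 hφ)

lemma isHermitian_outer (φ : (Fin n → ZMod 2) → ℂ) : (outer φ).IsHermitian :=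
  (Matrix.posSemidef_vecMulVec_self_star φ).isHermitian

/-- The fidelity `⟨φ|ρ|φ⟩` of a state `ρ` with the pure state `|φ⟩`. -/
noncomputable def fidelity (ρ : Matrix (Fin n → ZMod 2) (Fin n → ZMod 2) ℂ)
    (φ : (Fin n → ZMod 2) → ℂ) : ℝ :=
  (ρ * outer φ).trace.re

lemma fidelity_mem_Icc (hρ : IsDensityMatrix ρ) (hφ : ∑ j, Complex.normSq (φ j) = 1) :
    fidelity ρ φ ∈ Set.Icc (0 : ℝ) 1 := by
  rw [fidelity, Matrix.trace_mul_comm]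
  exact hρ.re_trace_mul_mem_Icc (isHermitian_outer φ)
    (vecMulVec_star_mul_self (dotProduct_star_eq_one_iff.2 hφ))

lemma fidelity_le_stabFidelity (hρ : IsDensityMatrix ρ) (hφ : IsStabilizerState φ) :
    fidelity ρ φ ≤ stabFidelity ρ := by
  have hbdd : BddAbove (Set.range fun ψ : {ψ : (Fin n → ZMod 2) → ℂ // IsStabilizerState ψ} =>
      fidelity ρ ψ.1) :=
    ⟨1, Set.forall_mem_range.2 fun ψ => (fidelity_mem_Icc hρ ψ.2.1).2⟩
  exact le_ciSup hbdd ⟨φ, hφ⟩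

lemma mem_weylSet_iff (hρ : ρ.IsHermitian) : x ∈ weylSet ρ ↔ weylCoeff ρ x ^ 2 = 1 := by
  rw [weylSet, Set.mem_ofPred_eq, ← ofReal_weylCoeff hρ, sq_eq_one_iff]
  norm_cast

lemma IsDensityMatrix.weylCoeff_eq_zero_of_notMem (hρ : IsDensityMatrix ρ) (hL : IsLagrangian L)
    (hone : L ⊆ weylSet ρ) (hx : x ∉ L) : weylCoeff ρ x = 0 := by
  rw [hL] at hx
  obtain ⟨y, hy, hxy⟩ : ∃ y ∈ L, sympl x y ≠ 0 := by simpa [symplComplement] using hx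
  have hyone := (mem_weylSet_iff hρ.posSemidef.isHermitian).1 (hone hy)
  have := hρ.weylCoeff_sq_add_sq_le_one hxy
  nlinarith

lemma IsDensityMatrix.weylSet_eq (hρ : IsDensityMatrix ρ) (hL : IsLagrangian L)
    (hone : L ⊆ weylSet ρ) : weylSet ρ = L := by
  refine Set.Subset.antisymm (fun x hx => ?_) hone
  by_contra hxL
  rw [mem_weylSet_iff hρ.posSemidef.isHermitian,
    hρ.weylCoeff_eq_zero_of_notMem hL hone hxL] at hx
  norm_num at hx

lemma Weyl_mul_outer (hφ : ∑ j, Complex.normSq (φ j) = 1) {c : ℂ} (hc : Weyl x *ᵥ φ = c • φ) :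
    Weyl x * outer φ = (weylCoeff (outer φ) x : ℂ) • outer φ := by
  have hmul : Weyl x * outer φ = c • outer φ := by
    rw [outer, Matrix.mul_vecMulVec, hc, Matrix.smul_vecMulVec]
  rw [ofReal_weylCoeff (isHermitian_outer φ), hmul, Matrix.trace_smul,
    (isDensityMatrix_outer hφ).trace_eq_one, smul_eq_mul, mul_one]

lemma mem_weylSet_outer (hφ : ∑ j, Complex.normSq (φ j) = 1) {c : ℂ}
    (hc : Weyl x *ᵥ φ = c • φ) : x ∈ weylSet (outer φ) := by
  rw [mem_weylSet_iff (isHermitian_outer φ)]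
  have h := congrArg (fun A => (Weyl x * A).trace) (Weyl_mul_outer hφ hc)
  simp only [← Matrix.mul_assoc, Weyl_mul_self, one_mul, Matrix.mul_smul, Matrix.trace_smul,
    (isDensityMatrix_outer hφ).trace_eq_one, ← ofReal_weylCoeff (isHermitian_outer φ),
    smul_eq_mul] at h
  rw [sq]
  exact_mod_cast h.symm

end StabilizerStates

section WeylEigenbases

open scoped Matrix

variable {n : ℕ} {κ : Type*} [Fintype κ] {L : Set (PhaseSpace n)}
  {b : OrthonormalBasis κ ℂ (EuclideanSpace ℂ (Fin n → ZMod 2))}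
  {ρ : Matrix (Fin n → ZMod 2) (Fin n → ZMod 2) ℂ} {x : PhaseSpace n}

/-- An orthonormal basis of joint eigenvectors of the Weyl operators indexed by `L`. -/
def IsWeylEigenbasis (L : Set (PhaseSpace n))
    (b : OrthonormalBasis κ ℂ (EuclideanSpace ℂ (Fin n → ZMod 2))) : Prop :=
  ∀ k, ∀ x ∈ L, ∃ c : ℂ, Weyl x *ᵥ b k = c • b k

lemma IsIsotropic.exists_isWeylEigenbasis (hL : IsIsotropic L) :
    ∃ b : OrthonormalBasis (Fin n → ZMod 2) ℂ (EuclideanSpace ℂ (Fin n → ZMod 2)),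
      IsWeylEigenbasis L b := by
  obtain ⟨b, hb⟩ := exists_orthonormalBasis_jointEigenvectors_matrix
    (A := fun x : L => Weyl x.1) (fun x => isHermitian_Weyl x.1)
    fun x y _ => commute_Weyl_of_sympl_eq_zero (hL x.2 y y.2)
  exact ⟨b, fun k x hx => hb k ⟨x, hx⟩⟩

lemma sum_normSq_orthonormalBasis (b : OrthonormalBasis κ ℂ (EuclideanSpace ℂ (Fin n → ZMod 2)))
    (k : κ) : ∑ j, Complex.normSq (b k j) = 1 := by
  have h := EuclideanSpace.norm_sq_eq (b k)
  rw [b.norm_eq_one, one_pow] at h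
  simpa only [Complex.normSq_eq_norm_sq] using h.symm

lemma sum_outer (b : OrthonormalBasis κ ℂ (EuclideanSpace ℂ (Fin n → ZMod 2))) :
    ∑ k, outer (b k) = 1 :=
  sum_vecMulVec_star_orthonormalBasis b

lemma sum_fidelity (hρ : IsDensityMatrix ρ)
    (b : OrthonormalBasis κ ℂ (EuclideanSpace ℂ (Fin n → ZMod 2))) :
    ∑ k, fidelity ρ (b k) = 1 := by
  simp only [fidelity, ← Complex.re_sum, ← Matrix.trace_sum, ← Matrix.mul_sum, sum_outer, mul_one,
    hρ.trace_eq_one, Complex.one_re]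

/-- The state left after measuring `ρ` in the basis `b`: its diagonal part in that basis. -/
noncomputable def dephase (b : OrthonormalBasis κ ℂ (EuclideanSpace ℂ (Fin n → ZMod 2)))
    (ρ : Matrix (Fin n → ZMod 2) (Fin n → ZMod 2) ℂ) :
    Matrix (Fin n → ZMod 2) (Fin n → ZMod 2) ℂ :=
  ∑ k, (fidelity ρ (b k) : ℂ) • outer (b k)

lemma isHermitian_dephase : (dephase b ρ).IsHermitian := by
  simp only [Matrix.IsHermitian, dephase, Matrix.conjTranspose_sum, Matrix.conjTranspose_smul,
    (isHermitian_outer _).eq, RCLike.star_def, Complex.conj_ofReal]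

lemma re_trace_mul_dephase : (ρ * dephase b ρ).trace.re = ∑ k, fidelity ρ (b k) ^ 2 := by
  simp only [dephase, Matrix.mul_sum, Matrix.trace_sum, Matrix.mul_smul, Matrix.trace_smul,
    smul_eq_mul, Complex.re_sum, Complex.re_ofReal_mul, sq]
  rfl

lemma weylCoeff_dephase :
    weylCoeff (dephase b ρ) x = ∑ k, fidelity ρ (b k) * weylCoeff (outer (b k)) x := by
  simp only [weylCoeff, dephase, Matrix.mul_sum, Matrix.trace_sum, Matrix.mul_smul,
    Matrix.trace_smul, smul_eq_mul, Complex.re_sum, Complex.re_ofReal_mul]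

namespace IsWeylEigenbasis

lemma subset_weylSet_outer (hb : IsWeylEigenbasis L b) (k : κ) : L ⊆ weylSet (outer (b k)) :=
  fun x hx =>
    have ⟨_, hc⟩ := hb k x hx
    mem_weylSet_outer (sum_normSq_orthonormalBasis b k) hc

lemma isStabilizerState (hb : IsWeylEigenbasis L b) (hL : IsLagrangian L) (k : κ) :
    IsStabilizerState (b k) := by
  have hk := sum_normSq_orthonormalBasis b k
  refine ⟨hk, ?_⟩
  rwa [(isDensityMatrix_outer hk).weylSet_eq hL (hb.subset_weylSet_outer k)]

lemma weylCoeff_dephase_of_mem (hb : IsWeylEigenbasis L b) (hx : x ∈ L) :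
    weylCoeff (dephase b ρ) x = weylCoeff ρ x := by
  have hmul : Weyl x * ρ = ∑ k, (weylCoeff (outer (b k)) x : ℂ) • (outer (b k) * ρ) := by
    calc Weyl x * ρ = ∑ k, Weyl x * outer (b k) * ρ := by
          rw [← Matrix.sum_mul, ← Matrix.mul_sum, sum_outer, mul_one]
      _ = ∑ k, (weylCoeff (outer (b k)) x : ℂ) • (outer (b k) * ρ) := by
          refine Finset.sum_congr rfl fun k _ => ?_
          obtain ⟨c, hc⟩ := hb k x hx
          rw [Weyl_mul_outer (sum_normSq_orthonormalBasis b k) hc, Matrix.smul_mul]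
  calc weylCoeff (dephase b ρ) x
      = ∑ k, fidelity ρ (b k) * weylCoeff (outer (b k)) x := weylCoeff_dephase
    _ = (∑ k, (weylCoeff (outer (b k)) x : ℂ) • (outer (b k) * ρ)).trace.re := by
        simp only [Matrix.trace_sum, Matrix.trace_smul, smul_eq_mul, Complex.re_sum,
          Complex.re_ofReal_mul, Matrix.trace_mul_comm _ ρ, fidelity, mul_comm]
    _ = weylCoeff ρ x := by rw [← hmul, weylCoeff]

lemma weylCoeff_dephase_of_notMem (hb : IsWeylEigenbasis L b) (hL : IsLagrangian L) (hx : x ∉ L) :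
    weylCoeff (dephase b ρ) x = 0 := by
  rw [weylCoeff_dephase]
  refine Finset.sum_eq_zero fun k _ => ?_
  have hk := isDensityMatrix_outer (sum_normSq_orthonormalBasis b k)
  rw [hk.weylCoeff_eq_zero_of_notMem hL (hb.subset_weylSet_outer k) hx, mul_zero]

lemma sum_pFun_eq_sum_fidelity_sq [DecidablePred (· ∈ L)] (hb : IsWeylEigenbasis L b)
    (hL : IsLagrangian L) (hρ : ρ.IsHermitian) :
    ∑ x with x ∈ L, pFun ρ x = ∑ k, fidelity ρ (b k) ^ 2 := by
  have h : (2 : ℝ) ^ n * ∑ x with x ∈ L, pFun ρ x = 2 ^ n * ∑ k, fidelity ρ (b k) ^ 2 := by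
    rw [← re_trace_mul_dephase, ← sum_weylCoeff_mul_weylCoeff hρ isHermitian_dephase,
      Finset.sum_filter, Finset.mul_sum]
    refine Finset.sum_congr rfl fun x _ => ?_
    split_ifs with hx
    · rw [hb.weylCoeff_dephase_of_mem hx, two_pow_mul_pFun, sq]
    · rw [hb.weylCoeff_dephase_of_notMem hL hx, mul_zero, mul_zero]
  exact mul_left_cancel₀ (by positivity) h

end IsWeylEigenbasis

end WeylEigenbases

section Soundness

variable {n : ℕ} {ρ : Matrix (Fin n → ZMod 2) (Fin n → ZMod 2) ℂ} {L : Set (PhaseSpace n)}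

namespace IsDensityMatrix

lemma sum_pFun_le_stabFidelity [DecidablePred (· ∈ L)] (hρ : IsDensityMatrix ρ)
    (hL : IsLagrangian L) : ∑ x with x ∈ L, pFun ρ x ≤ stabFidelity ρ := by
  obtain ⟨b, hb⟩ := hL.isIsotropic.exists_isWeylEigenbasis
  calc ∑ x with x ∈ L, pFun ρ x = ∑ k, fidelity ρ (b k) * fidelity ρ (b k) := by
        simp only [hb.sum_pFun_eq_sum_fidelity_sq hL hρ.posSemidef.isHermitian, sq]
    _ ≤ ∑ k, fidelity ρ (b k) * stabFidelity ρ := by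
        gcongr with k
        · exact (fidelity_mem_Icc hρ (sum_normSq_orthonormalBasis b k)).1
        · exact fidelity_le_stabFidelity hρ (hb.isStabilizerState hL k)
    _ = stabFidelity ρ := by rw [← Finset.sum_mul, sum_fidelity hρ, one_mul]

lemma four_pow_mul_pFun_pow_three_le [DecidablePred (· ∈ L)] (hρ : IsDensityMatrix ρ)
    (hL : {x | 1 / 2 < 2 ^ n * pFun ρ x} ⊆ L) (x : PhaseSpace n) :
    4 ^ n * pFun ρ x ^ 3 ≤ 1 / 4 * pFun ρ x + 3 / 4 * if x ∈ L then pFun ρ x else 0 := by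
  have hp : 0 ≤ pFun ρ x := by unfold pFun; positivity
  have hle : 2 ^ n * pFun ρ x ≤ 1 := two_pow_mul_pFun ρ x ▸ hρ.weylCoeff_sq_le_one x
  have hcube : 4 ^ n * pFun ρ x ^ 3 = (2 ^ n * pFun ρ x) ^ 2 * pFun ρ x := by
    rw [show (4 : ℝ) = 2 ^ 2 by norm_num, ← pow_mul, mul_comm 2 n, pow_mul]
    ring
  have hbound {r : ℝ} (hr : 2 ^ n * pFun ρ x ≤ r) : 4 ^ n * pFun ρ x ^ 3 ≤ r ^ 2 * pFun ρ x := by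
    rw [hcube]
    gcongr
  split_ifs with hx
  · linarith [hbound hle]
  · linarith [hbound (not_lt.1 fun h => hx (hL h))]

end IsDensityMatrix

end Soundness

/-- For every n-qubit mixed state ρ and every γ ∈ ℝ:
if 4^n ∑_x p_ρ(x)³ ≥ γ then F(ρ) ≥ (4γ − 1)/3. -/
theorem soundness_close_regime {n : ℕ}
    (ρ : Matrix (Fin n → ZMod 2) (Fin n → ZMod 2) ℂ)
    (hρ : ρ.PosSemidef) (hτ : ρ.trace = 1)
    (γ : ℝ) (hγle : γ ≤ 4 ^ n * ∑ x, (pFun ρ x) ^ 3) :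
    stabFidelity ρ ≥ (4 * γ - 1) / 3 := by
  classical
  have hdens : IsDensityMatrix ρ := ⟨hρ, hτ⟩
  obtain ⟨L, hML, hL⟩ := hdens.isIsotropic_setOf_half_lt.exists_isLagrangian_superset
  have hpurity : ∑ x, pFun ρ x ≤ 1 :=
    (sum_pFun hρ.isHermitian).trans_le hdens.re_trace_mul_self_le_one
  have hγ : γ ≤ 1 / 4 + 3 / 4 * stabFidelity ρ :=
    calc γ ≤ ∑ x, 4 ^ n * pFun ρ x ^ 3 := by rwa [← Finset.mul_sum]
      _ ≤ ∑ x, (1 / 4 * pFun ρ x + 3 / 4 * if x ∈ L then pFun ρ x else 0) :=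
        Finset.sum_le_sum fun x _ => hdens.four_pow_mul_pFun_pow_three_le hML x
      _ = 1 / 4 * ∑ x, pFun ρ x + 3 / 4 * ∑ x with x ∈ L, pFun ρ x := by
        rw [Finset.sum_add_distrib, ← Finset.mul_sum, ← Finset.mul_sum, ← Finset.sum_filter]
      _ ≤ 1 / 4 * 1 + 3 / 4 * stabFidelity ρ := by
        gcongr
        exact hdens.sum_pFun_le_stabFidelity hL
      _ = 1 / 4 + 3 / 4 * stabFidelity ρ := by rw [mul_one]
  linarith
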